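/- Let X ~ N_n(μ, Σ) be multivariate normal with mean μ and positive definite covariance Σ = (σ_{ij}), let p₁ ≥ 2 be an integer, and let f : ℝⁿ → ℝ be twice continuously differentiable such that the function x ↦ x₁^{p₁−2} f(x) satisfies the regularity and limit conditions of the normal case of Theorem 1 and all expectations below are finite. Then E[X₁^{p₁} f(X)] = Σ_{i=1}^n Σ_{j=1}^n σ_{1i} σ_{1j} E[∇_{i,j}(X₁^{p₁−2} f(X))] + 2μ₁ Σ_{i=1}^n σ_{1i} E[∇_i(X₁^{p₁−2} f(X))] + σ₁₁ E[X₁^{p₁−2} f(X)] + μ₁² E[X₁^{p₁−2} f(X)], where ∇_i and ∇_{i,j} are applied to the function x ↦ x₁^{p₁−2} f(x). -/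

import Mathlib

open MeasureTheory Real Set Filter Matrix

/-- The density of the multivariate normal `N_n(μ, Σ)` with positive definite `Σ`. -/
noncomputable def normalPdf (n : ℕ) (μ : Fin n → ℝ) (S : Matrix (Fin n) (Fin n) ℝ)
    (x : Fin n → ℝ) : ℝ :=
  (2 * π) ^ (-(n : ℝ) / 2) * (Real.sqrt S.det)⁻¹ *
    Real.exp (-(1 / 2) * ((x - μ) ⬝ᵥ S⁻¹.mulVec (x - μ)))

/-- First partial derivative `∇_i f`. -/
noncomputable def pd (n : ℕ) (f : (Fin n → ℝ) → ℝ) (i : Fin n) (x : Fin n → ℝ) : ℝ :=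
  fderiv ℝ f x (Pi.single i 1)

/-- Second partial derivative `∇_{i,j} f`. -/
noncomputable def pd2 (n : ℕ) (f : (Fin n → ℝ) → ℝ) (i j : Fin n) (x : Fin n → ℝ) : ℝ :=
  fderiv ℝ (fun y => pd n f j y) x (Pi.single i 1)

lemma aux_zero {n : ℕ} {F F' : (Fin n → ℝ) → ℝ} {v : Fin n → ℝ}
    (hF : Integrable F) (hF' : Integrable F')
    (hd : ∀ x, HasLineDerivAt ℝ F (F' x) x v) : ∫ x, F' x = 0 := by
  have := integral_bilinear_hasLineDerivAt_right_eq_neg_left_of_integrable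
    (μ := (volume : Measure (Fin n → ℝ))) (f := F) (f' := F') (g := fun _ => (1 : ℝ))
    (g' := fun _ => (0 : ℝ)) (v := v) (B := ContinuousLinearMap.mul ℝ ℝ)
    (by simpa using hF') (by simp) (by simpa using hF) (fun x _ => hd x)
    (fun x _ => by
      unfold HasLineDerivAt
      exact hasDerivAt_const _ _)
  simpa using this

lemma aux_quad {n : ℕ} (i1 : Fin n) (μ : Fin n → ℝ) (S : Matrix (Fin n) (Fin n) ℝ)
    (hS : S.PosDef) (x : Fin n → ℝ) (t : ℝ) :
    (x + t • S i1 - μ) ⬝ᵥ S⁻¹.mulVec (x + t • S i1 - μ) =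
      (x - μ) ⬝ᵥ S⁻¹.mulVec (x - μ) + 2 * t * (x i1 - μ i1) + t ^ 2 * S i1 i1 := by
  have hT : Sᵀ = S := by simpa using hS.isHermitian.eq
  have hu : IsUnit S.det := isUnit_iff_ne_zero.mpr hS.det_pos.ne'
  have hv : S i1 = S.mulVec (Pi.single i1 1) := by
    rw [Matrix.mulVec_single_one]
    ext i
    conv_lhs => rw [← hT]
    rfl
  have h1 : S⁻¹.mulVec (S i1) = Pi.single i1 1 := by
    rw [hv, Matrix.mulVec_mulVec, Matrix.nonsing_inv_mul _ hu, Matrix.one_mulVec]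
  have hTi : S⁻¹ᵀ = S⁻¹ := by rw [Matrix.transpose_nonsing_inv, hT]
  have h2 : ∀ w : Fin n → ℝ, S i1 ⬝ᵥ S⁻¹.mulVec w = w i1 := by
    intro w
    rw [Matrix.dotProduct_mulVec, ← Matrix.mulVec_transpose, hTi, h1]
    simp
  have e : x + t • S i1 - μ = (x - μ) + t • S i1 := by abel
  rw [e]
  simp only [Matrix.mulVec_add, Matrix.mulVec_smul, h1, dotProduct_add, add_dotProduct,
    smul_dotProduct, dotProduct_smul, h2]
  simp
  ring

lemma aux_pdf {n : ℕ} (i1 : Fin n) (μ : Fin n → ℝ) (S : Matrix (Fin n) (Fin n) ℝ)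
    (hS : S.PosDef) (x : Fin n → ℝ) :
    HasLineDerivAt ℝ (normalPdf n μ S) (-(x i1 - μ i1) * normalPdf n μ S x) x (S i1) := by
  unfold HasLineDerivAt normalPdf
  simp only [aux_quad i1 μ S hS]
  have h1 : HasDerivAt (fun t : ℝ => -(1 / 2) * ((x - μ) ⬝ᵥ S⁻¹.mulVec (x - μ)
      + 2 * t * (x i1 - μ i1) + t ^ 2 * S i1 i1))
      (-(1 / 2) * (2 * 1 * (x i1 - μ i1) + (((2 : ℕ) : ℝ) * 0 ^ (2 - 1) * 1) * S i1 i1)) 0 := by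
    refine HasDerivAt.const_mul _ (HasDerivAt.add (HasDerivAt.const_add _ ?_) ?_)
    · exact ((hasDerivAt_id (0:ℝ)).const_mul 2).mul_const _
    · exact ((hasDerivAt_id (0:ℝ)).pow 2).mul_const _
  refine (h1.exp.const_mul ((2 * π) ^ (-(n : ℝ) / 2) * (Real.sqrt S.det)⁻¹)).congr_deriv ?_
  simp
  ring

lemma aux_pd {n : ℕ} {h : (Fin n → ℝ) → ℝ} {x : Fin n → ℝ} (v : Fin n → ℝ)
    (hd : DifferentiableAt ℝ h x) :
    HasLineDerivAt ℝ h (∑ i, v i * pd n h i x) x v := by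
  have e : fderiv ℝ h x v = ∑ i, v i * pd n h i x := by
    have hv : v = ∑ i, v i • (Pi.single i 1 : Fin n → ℝ) := by
      ext j
      simp [Finset.sum_apply, Pi.single_apply]
    conv_lhs => rw [hv]
    simp only [map_sum, map_smul, smul_eq_mul, pd]
  rw [← e]
  exact hd.hasFDerivAt.hasLineDerivAt v

/-- Let `X ~ N_n(μ, Σ)` with positive definite `Σ`, let `p₁ ≥ 2`, and let `f` be twice
continuously differentiable such that `x ↦ x₁^(p₁-2) f(x)` satisfies the regularity and limit
conditions of the normal case of Theorem 1 and all expectations below are finite. Then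
`E[X₁^(p₁) f(X)] = Σᵢⱼ σ_{1i}σ_{1j} E[∇_{i,j}(X₁^(p₁-2)f(X))]
  + 2μ₁ Σᵢ σ_{1i} E[∇_i(X₁^(p₁-2)f(X))] + σ₁₁ E[X₁^(p₁-2)f(X)] + μ₁² E[X₁^(p₁-2)f(X)]`. -/
theorem stmt_8 (n : ℕ) (hn : 0 < n) (i1 : Fin n) (hi1 : i1 = ⟨0, hn⟩)
    (μ : Fin n → ℝ) (S : Matrix (Fin n) (Fin n) ℝ) (hS : S.PosDef)
    (A : Matrix (Fin n) (Fin n) ℝ) (hA_low : ∀ i j : Fin n, i < j → A i j = 0)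
    (hA : A * Aᵀ = S)
    (p1 : ℕ) (hp1 : 2 ≤ p1)
    (f : (Fin n → ℝ) → ℝ) (hf : ContDiff ℝ 2 f)
    (h : (Fin n → ℝ) → ℝ) (hh : h = fun x => (x i1) ^ (p1 - 2) * f x)
    (hint0 : Integrable (fun x : Fin n → ℝ => (x i1) ^ p1 * f x * normalPdf n μ S x))
    (hint1 : ∀ i j : Fin n,
      Integrable (fun x : Fin n → ℝ => pd2 n h i j x * normalPdf n μ S x))
    (hint2 : ∀ i : Fin n, Integrable (fun x : Fin n → ℝ => pd n h i x * normalPdf n μ S x))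
    (hint3 : Integrable (fun x : Fin n → ℝ => h x * normalPdf n μ S x))
    (hlim1 : ∀ x : Fin n → ℝ, Tendsto
      (fun t : ℝ => t * h (A.mulVec (Function.update x i1 t) + μ) *
        Real.exp (-(Function.update x i1 t ⬝ᵥ Function.update x i1 t) / 2))
      (cocompact ℝ) (nhds 0))
    (hlim2 : ∀ x : Fin n → ℝ, Tendsto
      (fun t : ℝ => pd n h i1 (A.mulVec (Function.update x i1 t) + μ) *
        Real.exp (-(Function.update x i1 t ⬝ᵥ Function.update x i1 t) / 2))
      (cocompact ℝ) (nhds 0)) :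
    ∫ x : Fin n → ℝ, (x i1) ^ p1 * f x * normalPdf n μ S x =
      (∑ i : Fin n, ∑ j : Fin n,
        S i1 i * S i1 j * ∫ x : Fin n → ℝ, pd2 n h i j x * normalPdf n μ S x)
      + 2 * μ i1 * (∑ i : Fin n, S i1 i * ∫ x : Fin n → ℝ, pd n h i x * normalPdf n μ S x)
      + S i1 i1 * (∫ x : Fin n → ℝ, h x * normalPdf n μ S x)
      + (μ i1) ^ 2 * ∫ x : Fin n → ℝ, h x * normalPdf n μ S x := by
  have hhC : ContDiff ℝ 2 h := by rw [hh]; fun_prop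
  have hpdC : ∀ i, ContDiff ℝ 1 (pd n h i) := by
    intro i
    have : ContDiff ℝ 1 (fderiv ℝ h) := hhC.fderiv_right (by norm_num)
    exact this.clm_apply contDiff_const
  have hφc : Continuous (normalPdf n μ S) := by
    unfold normalPdf
    fun_prop
  set φ := normalPdf n μ S with hφ
  have hx2 : ∀ x : Fin n → ℝ, (x i1) ^ p1 * f x = (x i1) ^ 2 * h x := by
    intro x
    rw [hh]
    dsimp only
    rw [← mul_assoc, ← pow_add, Nat.add_sub_cancel' hp1]
  simp only [hx2] at hint0 ⊢
  have hintx : Integrable (fun x : Fin n → ℝ => x i1 * h x * φ x) := by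
    refine (hint0.norm.add hint3.norm).mono' ?_ (Eventually.of_forall fun x => ?_)
    · have := hhC.continuous
      exact Continuous.aestronglyMeasurable (by fun_prop)
    · simp only [Pi.add_apply, norm_mul, norm_pow]
      have : ‖x i1‖ ≤ ‖x i1‖ ^ 2 + 1 := by nlinarith [sq_nonneg (‖x i1‖ - 1), norm_nonneg (x i1)]
      have h0 : 0 ≤ ‖h x‖ * ‖φ x‖ := by positivity
      nlinarith [mul_le_mul_of_nonneg_right this h0]
  -- directional derivatives
  have hDint : Integrable (fun x => (∑ i, S i1 i * pd n h i x) * φ x) := by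
    simp only [Finset.sum_mul, mul_assoc]
    exact integrable_finsetSum _ fun i _ => (hint2 i).const_mul _
  have hDDint : Integrable (fun x => (∑ i, ∑ j, S i1 i * S i1 j * pd2 n h i j x) * φ x) := by
    simp only [Finset.sum_mul, mul_assoc]
    exact integrable_finsetSum _ fun i _ => integrable_finsetSum _ fun j _ =>
      ((hint1 i j).const_mul _).const_mul _
  have hDval : ∫ x, (∑ i, S i1 i * pd n h i x) * φ x =
      ∑ i, S i1 i * ∫ x, pd n h i x * φ x := by
    simp only [Finset.sum_mul, mul_assoc]
    rw [integral_finsetSum _ fun i _ => (hint2 i).const_mul _]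
    simp only [integral_const_mul]
  have hDDval : ∫ x, (∑ i, ∑ j, S i1 i * S i1 j * pd2 n h i j x) * φ x =
      ∑ i, ∑ j, S i1 i * S i1 j * ∫ x, pd2 n h i j x * φ x := by
    simp only [Finset.sum_mul, mul_assoc]
    rw [integral_finsetSum _ fun i _ => integrable_finsetSum _ fun j _ =>
      ((hint1 i j).const_mul _).const_mul _]
    refine Finset.sum_congr rfl fun i _ => ?_
    rw [integral_finsetSum _ fun j _ => ((hint1 i j).const_mul _).const_mul _]
    simp only [integral_const_mul]
  have hDd : ∀ x, HasLineDerivAt ℝ h (∑ i, S i1 i * pd n h i x) x (S i1) := fun x =>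
    aux_pd _ (hhC.differentiable (by norm_num) x)
  have hDDd : ∀ x, HasLineDerivAt ℝ (fun x => ∑ i, S i1 i * pd n h i x)
      (∑ i, ∑ j, S i1 i * S i1 j * pd2 n h i j x) x (S i1) := by
    intro x
    have key : ∀ j, HasLineDerivAt ℝ (pd n h j) (∑ i, S i1 i * pd2 n h i j x) x (S i1) :=
      fun j => aux_pd _ ((hpdC j).differentiable (by norm_num) x)
    unfold HasLineDerivAt at key ⊢
    have := HasDerivAt.fun_sum (u := Finset.univ) fun j _ => (key j).const_mul (S i1 j)
    convert this using 1
    rw [Finset.sum_comm]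
    refine Finset.sum_congr rfl fun j _ => ?_
    rw [Finset.mul_sum]
    exact Finset.sum_congr rfl fun i _ => by ring
  have hφd : ∀ x, HasLineDerivAt ℝ φ (-(x i1 - μ i1) * φ x) x (S i1) := aux_pdf i1 μ S hS
  have hxd : ∀ x : Fin n → ℝ, HasLineDerivAt ℝ (fun x : Fin n → ℝ => x i1 - μ i1)
      (S i1 i1) x (S i1) := by
    intro x
    unfold HasLineDerivAt
    have := (((hasDerivAt_id (0:ℝ)).mul_const (S i1 i1)).const_add (x i1)).sub_const (μ i1)
    simpa using this
  have e1 := aux_zero (F := fun x => h x * φ x)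
    (F' := fun x => (∑ i, S i1 i * pd n h i x) * φ x - x i1 * h x * φ x + μ i1 * (h x * φ x))
    (v := S i1) hint3 ((hDint.sub hintx).add (hint3.const_mul _)) (fun x => by
      have a := hDd x
      have b := hφd x
      unfold HasLineDerivAt at a b ⊢
      refine (a.mul b).congr_deriv ?_
      simp
      ring)
  have e2 := aux_zero
    (F := fun x => ((∑ i, S i1 i * pd n h i x) + (x i1 - μ i1) * h x) * φ x)
    (F' := fun x => (∑ i, ∑ j, S i1 i * S i1 j * pd2 n h i j x) * φ x
      + (S i1 i1 - μ i1 ^ 2) * (h x * φ x) - x i1 ^ 2 * h x * φ x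
      + 2 * μ i1 * (x i1 * h x * φ x))
    (v := S i1)
    (by
      refine ((hDint.add hintx).sub (hint3.const_mul (μ i1))).congr
        (Eventually.of_forall fun x => ?_)
      simp only [Pi.add_apply, Pi.sub_apply]
      ring)
    (((hDDint.add (hint3.const_mul _)).sub hint0).add (hintx.const_mul _))
    (fun x => by
      have a := hDd x
      have b := hφd x
      have c := hDDd x
      have d := hxd x
      unfold HasLineDerivAt at a b c d ⊢
      refine ((c.add (d.mul a)).mul b).congr_deriv ?_
      simp
      ring)
  have I1 : Integrable (fun x => (∑ i, S i1 i * pd n h i x) * φ x - x i1 * h x * φ x) :=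
    hDint.sub hintx
  have I2 : Integrable (fun x => (∑ i, ∑ j, S i1 i * S i1 j * pd2 n h i j x) * φ x
      + (S i1 i1 - μ i1 ^ 2) * (h x * φ x)) := hDDint.add (hint3.const_mul _)
  have I3 : Integrable (fun x => (∑ i, ∑ j, S i1 i * S i1 j * pd2 n h i j x) * φ x
      + (S i1 i1 - μ i1 ^ 2) * (h x * φ x) - x i1 ^ 2 * h x * φ x) := I2.sub hint0
  rw [integral_add I1 (hint3.const_mul _), integral_sub hDint hintx,
    integral_const_mul, hDval] at e1
  rw [integral_add I3 (hintx.const_mul _), integral_sub I2 hint0,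
    integral_add hDDint (hint3.const_mul _),
    integral_const_mul, integral_const_mul, hDDval] at e2
  linear_combination (-1 : ℝ) * e2 - 2 * μ i1 * e1
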